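/- Let d = 2 and let r ≥ 2 be an integer. There exist constants c(r) > 0 and C(r) > 0 such that for every n and every V ≥ V_0 := c(r)/b_n the following holds: for every axis-parallel box B = ∏_{j=1}^2 [x_j^0 - r u_j/2, x_j^0 + r u_j/2) ⊆ [0,1)^2 with vol(B) = V, one has |b_n^{-1} Σ_{μ=1}^{b_n} h^r_B(μ/b_n, {μ b_{n-1}/b_n}) - ∫_{[0,1]^2} h^r_B(x) dx| ≤ C(r) log(2V/V_0) / b_n^r, where log denotes the logarithm to base 2. -/

import Mathlib

/-!
The Fibonacci points `(μ/N, {μb/N})`, with `N = fibb n` and `b = fibb (n - 1)`, form an integration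
lattice. Expanding both periodized kernels in absolutely convergent Fourier series (Poisson
summation, `hkerPer_fourier`) and using orthogonality of characters (`error_le`), the error becomes
the sum of products of Fourier coefficients over the nonzero points of the dual lattice
`k₁ + bk₂ ≡ 0 mod N`. The `k`-th coefficient of the kernel is at most `maj u k ^ r`, where
`maj u k = min (u, 1 / max (1, |k|))`, because the `r`-fold convolution turns into an `r`-th power.

The arithmetic input is `lattice_bound`: every nonzero dual point satisfies
`N ≤ 6 max(1,|k₁|) max(1,|k₂|)`. Hence each product of two majorants is at most `6/N`, and it
suffices to treat the exponent `2` (`sum_dual_le`). Points with `max(1,|k₁|)` at least `N/6`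
contribute `O(N⁻²)` (`sum_far_le`). The others are grouped by the dyadic size `2^s` of `k₁`; inside
a group the lattice bound applied to differences shows that the `k₂` are separated by
`δ = N/(6·2^s)`, so the group contributes `O(N⁻²) min(u₁2^s, 1) min(u₂N/(12·2^s), 1)`
(`sum_near_le`). Summing over `s`, only about `log₂ (u₁u₂N/12)` scales are not in a geometric tail
(`sum_dyadic_le`), and this is the logarithm in the claim.
-/

open MeasureTheory

/-- Fibonacci numbers with `b₀ = b₁ = 1`. -/
def fibb : ℕ → ℕ
  | 0 => 1
  | 1 => 1
  | n + 2 => fibb (n + 1) + fibb n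

/-- The characteristic function `χ_{[-u/2,u/2)}`. -/
noncomputable def hk1 (u x : ℝ) : ℝ := if -(u / 2) ≤ x ∧ x < u / 2 then 1 else 0

/-- The `r`-smooth kernel: `h¹(·,u) = χ_{[-u/2,u/2)}` and `h^r(·,u) = h^{r-1}(·,u) ∗ h¹(·,u)`. -/
noncomputable def hker : ℕ → ℝ → ℝ → ℝ
  | 0, _, _ => 0
  | 1, u, x => hk1 u x
  | r + 2, u, x => ∫ y : ℝ, hker (r + 1) u (x - y) * hk1 u y

/-- The `1`-periodization of the `r`-smooth kernel `h^r(·,u)`. -/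
noncomputable def hkerPer (r : ℕ) (u t : ℝ) : ℝ := ∑' m : ℤ, hker r u (t - m)

open scoped FourierTransform

/-! ### Fourier transform of the kernels -/

lemma hker_complex_conv (r : ℕ) (u : ℝ) :
    (fun x => (hker (r + 2) u x : ℂ)) =
      convolution (fun x => (hk1 u x : ℂ)) (fun x => (hker (r + 1) u x : ℂ))
        (ContinuousLinearMap.mul ℂ ℂ) volume := by
  ext x
  simp only [hker, convolution, ContinuousLinearMap.mul_apply']
  rw [← integral_complex_ofReal]
  congr 1
  ext y
  push_cast
  ring

lemma hk1_eq_indicator (u : ℝ) :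
    (fun x => (hk1 u x : ℂ)) = (Set.Ico (-(u / 2)) (u / 2)).indicator (fun _ => (1 : ℂ)) := by
  ext x
  by_cases h : -(u / 2) ≤ x ∧ x < u / 2
  · simp [hk1, h]
  · rw [Set.indicator_of_notMem (by simpa using h)]
    simp [hk1, h]

lemma hk1_integrable (u : ℝ) : Integrable (fun x => (hk1 u x : ℂ)) := by
  rw [hk1_eq_indicator, integrable_indicator_iff measurableSet_Ico]
  exact integrableOn_const (by simp)

lemma hk1_compactSupport (u : ℝ) : HasCompactSupport (fun x => (hk1 u x : ℂ)) := by
  refine HasCompactSupport.intro (isCompact_Icc (a := -(u / 2)) (b := u / 2)) fun x hx => ?_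
  have : ¬ (-(u / 2) ≤ x ∧ x < u / 2) := fun h => hx ⟨h.1, h.2.le⟩
  simp [hk1, this]

/-- Convolution with `hk1` preserves integrability and compact support and multiplies the Fourier
transform by that of `hk1`. -/
lemma hker_basic (u : ℝ) (r : ℕ) :
    Integrable (fun x => (hker (r + 1) u x : ℂ)) ∧
      HasCompactSupport (fun x => (hker (r + 1) u x : ℂ)) ∧
      ∀ k : ℝ, 𝓕 (fun x => (hker (r + 1) u x : ℂ)) k = (𝓕 (fun x => (hk1 u x : ℂ)) k) ^ (r + 1) := by
  induction r with
  | zero => exact ⟨hk1_integrable u, hk1_compactSupport u, fun k => by simp [hker]⟩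
  | succ r ih =>
    obtain ⟨h1, h2, h3⟩ := ih
    rw [hker_complex_conv]
    refine ⟨(hk1_integrable u).integrable_convolution _ h1,
      (hk1_compactSupport u).convolution _ h2, fun k => ?_⟩
    rw [Real.fourier_mul_convolution_eq (hk1_integrable u) h1, h3]
    ring

/-- From the second kernel on, `hker` is a difference of two primitives of an integrable function.
This continuity is what Poisson summation requires. -/
lemma hker_continuous (u : ℝ) (hu : 0 < u) (r : ℕ) :
    Continuous (fun x => (hker (r + 2) u x : ℂ)) := by
  have hint := (hker_basic u r).1
  have h : (fun x => (hker (r + 2) u x : ℂ)) = fun x =>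
      (∫ z in (0 : ℝ)..(x + u / 2), (hker (r + 1) u z : ℂ)) -
        ∫ z in (0 : ℝ)..(x - u / 2), (hker (r + 1) u z : ℂ) := by
    ext x
    rw [intervalIntegral.integral_interval_sub_left hint.intervalIntegrable
      hint.intervalIntegrable, congrFun (hker_complex_conv r u) x]
    have e1 : (∫ z in (x - u / 2)..(x + u / 2), (hker (r + 1) u z : ℂ)) =
        ∫ y in (-(u / 2))..(u / 2), (hker (r + 1) u (x - y) : ℂ) := by
      rw [intervalIntegral.integral_comp_sub_left (fun z => (hker (r + 1) u z : ℂ))]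
      congr 1; ring
    rw [e1, intervalIntegral.integral_of_le (by linarith), ← integral_Ico_eq_integral_Ioc,
      ← integral_indicator measurableSet_Ico]
    simp only [convolution, ContinuousLinearMap.mul_apply']
    congr 1
    ext y
    rw [congrFun (hk1_eq_indicator u) y]
    by_cases hy : y ∈ Set.Ico (-(u / 2)) (u / 2) <;> simp [hy]
  rw [h]
  have hc := intervalIntegral.continuous_primitive (f := fun z => (hker (r + 1) u z : ℂ))
    (fun a b => hint.intervalIntegrable (a := a) (b := b)) 0
  exact (hc.comp (continuous_id.add continuous_const)).sub
    (hc.comp (continuous_id.sub continuous_const))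

/-- `min (u, 1 / max (1, |k|))`, a majorant of the modulus of the `k`-th Fourier coefficient of the
indicator of an interval of length `u ≤ 1`; taking `max` with `1` makes it meaningful at `k = 0`. -/
noncomputable def maj (u : ℝ) (k : ℤ) : ℝ := min u (1 / max 1 |(k : ℝ)|)

lemma maj_pos {u : ℝ} (hu : 0 < u) (k : ℤ) : 0 < maj u k := by
  unfold maj; positivity

lemma norm_fourier_hk1_le {u : ℝ} (hu : 0 < u) (hu1 : u ≤ 1) (k : ℤ) :
    ‖𝓕 (fun x => (hk1 u x : ℂ)) (k : ℝ)‖ ≤ maj u k := by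
  have hF : 𝓕 (fun x => (hk1 u x : ℂ)) (k : ℝ) =
      ∫ x in (-(u / 2))..(u / 2), Complex.exp ((-2 * Real.pi * k * Complex.I) * x) := by
    rw [Real.fourier_real_eq_integral_exp_smul, intervalIntegral.integral_of_le (by linarith),
      ← integral_Ico_eq_integral_Ioc, ← integral_indicator measurableSet_Ico]
    congr 1
    ext y
    rw [congrFun (hk1_eq_indicator u) y]
    by_cases hy : y ∈ Set.Ico (-(u / 2)) (u / 2)
    · simp only [hy, Set.indicator_of_mem, smul_eq_mul, mul_one]
      congr 1; push_cast; ring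
    · simp [hy]
  have hnorm : ∀ x : ℝ, ‖Complex.exp ((-2 * Real.pi * k * Complex.I) * x)‖ = 1 := by
    intro x
    have : (-2 * Real.pi * k * Complex.I) * x = ((-2 * Real.pi * k * x : ℝ) : ℂ) * Complex.I := by
      push_cast; ring
    rw [this, Complex.norm_exp_ofReal_mul_I]
  have hle : ‖𝓕 (fun x => (hk1 u x : ℂ)) (k : ℝ)‖ ≤ u := by
    rw [hF]
    refine (intervalIntegral.norm_integral_le_of_norm_le_const (C := 1)
      fun x _ => (hnorm x).le).trans ?_
    rw [one_mul, abs_of_nonneg] <;> linarith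
  refine le_min hle ?_
  rcases eq_or_ne k 0 with rfl | hk
  · simpa using hle.trans hu1
  have hk1 : (1 : ℝ) ≤ |(k : ℝ)| := by exact_mod_cast Int.one_le_abs hk
  rw [max_eq_right hk1, hF, integral_exp_mul_complex (by simp [hk, Real.pi_ne_zero]), norm_div]
  have hden : ‖(-2 * Real.pi * k * Complex.I : ℂ)‖ = 2 * Real.pi * |(k : ℝ)| := by
    simp [abs_of_pos Real.pi_pos]
  rw [hden, div_le_div_iff₀ (by positivity) (by positivity)]
  have h2 : ‖Complex.exp ((-2 * Real.pi * k * Complex.I) * (u / 2 : ℝ)) -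
      Complex.exp ((-2 * Real.pi * k * Complex.I) * (-(u / 2) : ℝ))‖ ≤ 2 := by
    refine (norm_sub_le _ _).trans ?_
    rw [hnorm, hnorm]; norm_num
  have hpi := Real.pi_gt_three
  nlinarith [h2]

lemma summable_inv_max_sq : Summable fun k : ℤ => (1 / max 1 |(k : ℝ)|) ^ 2 := by
  refine ((Real.summable_one_div_int_pow (p := 2)).2 one_lt_two).congr_cofinite ?_
  filter_upwards [(Set.finite_singleton (0 : ℤ)).compl_mem_cofinite] with k hk
  have hk1 : (1 : ℝ) ≤ |(k : ℝ)| := by exact_mod_cast Int.one_le_abs (by simpa using hk)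
  rw [max_eq_right hk1, div_pow, sq_abs, one_pow]

lemma summable_maj_pow {u : ℝ} (hu : 0 < u) {r : ℕ} (hr : 2 ≤ r) :
    Summable fun k : ℤ => maj u k ^ r := by
  refine summable_inv_max_sq.of_nonneg_of_le (fun k => (pow_pos (maj_pos hu k) r).le) fun k => ?_
  have h0 : (1 / max 1 |(k : ℝ)|) ≤ 1 := by
    rw [div_le_one (by positivity)]; exact le_max_left _ _
  exact (pow_le_pow_left₀ (maj_pos hu k).le (min_le_right _ _) r).trans
    (pow_le_pow_of_le_one (by positivity) h0 hr)

/-! ### Fourier series of the periodized kernels -/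

/-- The character `t ↦ e^{2πikt}`. -/
noncomputable def ech (k : ℤ) (t : ℝ) : ℂ := Complex.exp (2 * Real.pi * Complex.I * k * t)

lemma ech_zero (t : ℝ) : ech 0 t = 1 := by simp [ech]

lemma norm_ech (k : ℤ) (t : ℝ) : ‖ech k t‖ = 1 := by
  have : 2 * Real.pi * Complex.I * k * t = ((2 * Real.pi * k * t : ℝ) : ℂ) * Complex.I := by
    push_cast; ring
  rw [ech, this, Complex.norm_exp_ofReal_mul_I]

lemma ech_add (k : ℤ) (s t : ℝ) : ech k (s + t) = ech k s * ech k t := by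
  rw [ech, ech, ech, ← Complex.exp_add]; congr 1; push_cast; ring

lemma ech_fract (k : ℤ) (t : ℝ) : ech k (Int.fract t) = ech k t := by
  rw [ech, ech, Complex.exp_eq_exp_iff_exists_int]
  refine ⟨-(k * ⌊t⌋), ?_⟩
  rw [Int.fract]; push_cast; ring

/-- Poisson summation: the shifted periodized kernel is everywhere the sum of its Fourier series,
whose coefficients are dominated by `maj u k ^ r`. -/
lemma hkerPer_fourier {u : ℝ} (hu : 0 < u) (hu1 : u ≤ 1) {r : ℕ} (hr : 2 ≤ r) (x0 : ℝ) :
    ∃ a : ℤ → ℂ, (∀ k, ‖a k‖ ≤ maj u k ^ r) ∧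
      ∀ t : ℝ, HasSum (fun k => a k * ech k t) (hkerPer r u (t - x0) : ℂ) := by
  obtain ⟨r, rfl⟩ := Nat.exists_eq_add_of_le' hr
  obtain ⟨-, h2, h3⟩ := hker_basic u (r + 1)
  set f : ℝ → ℂ := fun x => (hker (r + 2) u x : ℂ) with hf
  have hb : ∀ k : ℤ, ‖𝓕 f (k : ℝ)‖ ≤ maj u k ^ (r + 2) := fun k => by
    rw [h3, norm_pow]
    exact pow_le_pow_left₀ (norm_nonneg _) (norm_fourier_hk1_le hu hu1 k) _
  have hs : Summable fun k : ℤ => ‖𝓕 f (k : ℝ)‖ :=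
    (summable_maj_pow hu hr).of_nonneg_of_le (fun _ => norm_nonneg _) hb
  refine ⟨fun k => 𝓕 f (k : ℝ) * ech k (-x0), fun k => ?_, fun t => ?_⟩
  · rw [norm_mul, norm_ech, mul_one]; exact hb k
  have hO : f =O[Filter.cocompact ℝ] fun x : ℝ => |x| ^ (-(2 : ℝ)) := by
    have h0 : f =ᶠ[Filter.cocompact ℝ] fun _ => 0 := by
      filter_upwards [h2.isCompact.compl_mem_cocompact] with x hx
      exact image_eq_zero_of_notMem_tsupport hx
    exact h0.trans_isBigO (Asymptotics.isBigO_zero _ _)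
  have hP := Real.tsum_eq_tsum_fourier_of_rpow_decay_of_summable (hker_continuous u hu r)
    one_lt_two hO hs.of_norm (t - x0)
  have hterm : ∀ k : ℤ, 𝓕 f (k : ℝ) * fourier k ((t - x0 : ℝ) : UnitAddCircle) =
      𝓕 f (k : ℝ) * ech k (-x0) * ech k t := by
    intro k
    rw [mul_assoc, ← ech_add, fourier_coe_apply, ech]
    congr 2; push_cast; ring
  replace hP := hP.trans (tsum_congr hterm)
  have hper : (hkerPer (r + 2) u (t - x0) : ℂ) = ∑' n : ℤ, f (t - x0 + n) := by
    rw [hkerPer, Complex.ofReal_tsum, ← (Equiv.neg ℤ).tsum_eq]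
    refine tsum_congr fun m => ?_
    simp [hf]
  rw [hper, hP]
  have hsum : Summable fun k : ℤ => 𝓕 f (k : ℝ) * ech k (-x0) * ech k t := by
    refine Summable.of_norm ?_
    simpa only [norm_mul, norm_ech, mul_one] using hs
  exact hsum.hasSum

/-! ### The error as a sum over the dual lattice -/

lemma ech_add_index (k l : ℤ) (t : ℝ) : ech (k + l) t = ech k t * ech l t := by
  rw [ech, ech, ech, ← Complex.exp_add]; congr 1; push_cast; ring

/-- Orthogonality of the characters on the `N`-th roots of unity. -/
lemma sum_ech (N : ℕ) (hN : 0 < N) (m : ℤ) :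
    ∑ μ ∈ Finset.Icc 1 N, ech m ((μ : ℝ) / N) = if (N : ℤ) ∣ m then (N : ℂ) else 0 := by
  have hN' : (N : ℂ) ≠ 0 := by exact_mod_cast hN.ne'
  set z : ℂ := Complex.exp (2 * Real.pi * Complex.I * m / N) with hz
  have hterm : ∀ μ : ℕ, ech m ((μ : ℝ) / N) = z ^ μ := by
    intro μ
    rw [ech, hz, ← Complex.exp_nat_mul]
    congr 1; push_cast; ring
  have hzN : z ^ N = 1 := by
    rw [hz, ← Complex.exp_nat_mul, Complex.exp_eq_one_iff]
    exact ⟨m, by field_simp⟩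
  have hz1 : z = 1 ↔ (N : ℤ) ∣ m := by
    rw [hz, Complex.exp_eq_one_iff]
    constructor
    · rintro ⟨n, hn⟩
      refine ⟨n, ?_⟩
      have h2 := Complex.two_pi_I_ne_zero
      have : (m : ℂ) = N * n := by
        field_simp at hn
        linear_combination hn
      exact_mod_cast this
    · rintro ⟨n, rfl⟩
      refine ⟨n, ?_⟩
      push_cast
      field_simp
  simp only [hterm]
  split_ifs with h
  · simp [hz1.2 h]
  · have hne : z ≠ 1 := fun h' => h (hz1.1 h')
    rw [← Finset.Ico_add_one_right_eq_Icc, geom_sum_Ico hne (by omega), pow_succ, hzN]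
    simp

lemma integral_ech (k : ℤ) : ∫ t in (0 : ℝ)..1, ech k t = if k = 0 then 1 else 0 := by
  split_ifs with h
  · subst h; simp [ech_zero]
  · simp only [ech]
    rw [integral_exp_mul_complex (by simp [h, Real.pi_ne_zero])]
    have : Complex.exp (2 * Real.pi * Complex.I * k * (1 : ℝ)) = 1 :=
      Complex.exp_eq_one_iff.2 ⟨k, by push_cast; ring⟩
    rw [this]; simp

lemma continuous_ech (k : ℤ) : Continuous (ech k) := by
  unfold ech; fun_prop

lemma integral_of_fourier {F : ℝ → ℝ} {a : ℤ → ℂ} (ha : Summable fun k => ‖a k‖)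
    (hF : ∀ t, HasSum (fun k => a k * ech k t) (F t : ℂ)) :
    ((∫ t in (0 : ℝ)..1, F t : ℝ) : ℂ) = a 0 := by
  rw [← intervalIntegral.integral_ofReal]
  have h := intervalIntegral.hasSum_integral_of_dominated_convergence (a := 0) (b := 1)
    (μ := volume) (F := fun k t => a k * ech k t) (f := fun t => (F t : ℂ))
    (fun k _ => ‖a k‖)
    (fun k => (continuous_const.mul (continuous_ech k)).aestronglyMeasurable)
    (fun k => Filter.Eventually.of_forall fun t _ => by rw [norm_mul, norm_ech, mul_one])
    (Filter.Eventually.of_forall fun t _ => ha)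
    (by simp)
    (Filter.Eventually.of_forall fun t _ => hF t)
  have h2 : ∀ k, ∫ t in (0 : ℝ)..1, a k * ech k t = if k = 0 then a 0 else 0 := by
    intro k
    rw [intervalIntegral.integral_const_mul, integral_ech]
    split_ifs with hk
    · rw [hk, mul_one]
    · rw [mul_zero]
  simp only [h2] at h
  exact h.unique (hasSum_ite_eq 0 (a 0))

/-- The error of an integration lattice is the sum of the Fourier coefficients over the nonzero
points of the dual lattice; hence it is bounded by any bound for the finite partial sums of their
norms. -/
lemma error_le {N : ℕ} (hN : 0 < N) (b : ℕ) {F G : ℝ → ℝ} {a c : ℤ → ℂ}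
    (ha : Summable fun k => ‖a k‖) (hc : Summable fun k => ‖c k‖)
    (hF : ∀ t, HasSum (fun k => a k * ech k t) (F t : ℂ))
    (hG : ∀ t, HasSum (fun k => c k * ech k t) (G t : ℂ)) {B : ℝ}
    (hB : ∀ K : Finset (ℤ × ℤ), (∀ p ∈ K, (N : ℤ) ∣ p.1 + b * p.2 ∧ p ≠ 0) →
      ∑ p ∈ K, ‖a p.1‖ * ‖c p.2‖ ≤ B) :
    |(N : ℝ)⁻¹ * (∑ μ ∈ Finset.Icc 1 N, F ((μ : ℝ) / N) * G (Int.fract ((μ : ℝ) * b / N))) -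
      ∫ x in (0 : ℝ)..1, ∫ y in (0 : ℝ)..1, F x * G y| ≤ B := by
  have hN' : (N : ℂ) ≠ 0 := by exact_mod_cast hN.ne'
  have hint : ((∫ x in (0 : ℝ)..1, ∫ y in (0 : ℝ)..1, F x * G y : ℝ) : ℂ) = a 0 * c 0 := by
    simp only [intervalIntegral.integral_const_mul, intervalIntegral.integral_mul_const]
    rw [Complex.ofReal_mul, integral_of_fourier ha hF, integral_of_fourier hc hG]
  have hprod : ∀ μ : ℕ, HasSum (fun p : ℤ × ℤ => a p.1 * c p.2 * ech (p.1 + b * p.2) ((μ : ℝ) / N))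
      ((F ((μ : ℝ) / N) * G (Int.fract ((μ : ℝ) * b / N)) : ℝ) : ℂ) := by
    intro μ
    have h1 := hF ((μ : ℝ) / N)
    have h2 := hG (Int.fract ((μ : ℝ) * b / N))
    have hs : Summable fun p : ℤ × ℤ => (a p.1 * ech p.1 ((μ : ℝ) / N)) *
        (c p.2 * ech p.2 (Int.fract ((μ : ℝ) * b / N))) := by
      refine summable_mul_of_summable_norm (f := fun k => a k * ech k ((μ : ℝ) / N))
        (g := fun k => c k * ech k (Int.fract ((μ : ℝ) * b / N))) ?_ ?_
      · simpa only [norm_mul, norm_ech, mul_one] using ha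
      · simpa only [norm_mul, norm_ech, mul_one] using hc
    have h3 := h1.mul h2 hs
    rw [Complex.ofReal_mul]
    refine Eq.mpr (congrArg (fun f => HasSum f _) (funext fun p => ?_)) h3
    rw [ech_fract, ech_add_index]
    have : ech (b * p.2) ((μ : ℝ) / N) = ech p.2 ((μ : ℝ) * b / N) := by
      rw [ech, ech]; congr 1; push_cast; ring
    rw [this]; ring
  have hsum := ((hasSum_sum fun μ (_ : μ ∈ Finset.Icc 1 N) => hprod μ).mul_left (N : ℂ)⁻¹).sub
    (hasSum_ite_eq (0 : ℤ × ℤ) (a 0 * c 0))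
  have hterm : ∀ p : ℤ × ℤ, ((N : ℂ)⁻¹ * ∑ μ ∈ Finset.Icc 1 N,
      a p.1 * c p.2 * ech (p.1 + b * p.2) ((μ : ℝ) / N)) - (if p = 0 then a 0 * c 0 else 0) =
      if (N : ℤ) ∣ p.1 + b * p.2 ∧ p ≠ 0 then a p.1 * c p.2 else 0 := by
    intro p
    rw [← Finset.mul_sum, sum_ech N hN]
    rcases eq_or_ne p 0 with rfl | hp
    · simp
      field_simp
      simp
    · by_cases hd : (N : ℤ) ∣ p.1 + b * p.2
      · simp only [hd, hp, if_true, if_false, ne_eq, not_false_eq_true, and_self]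
        field_simp
        simp
      · simp [hd, hp]
  simp only [hterm] at hsum
  rw [← hint, ← Complex.ofReal_sum, ← Complex.ofReal_natCast, ← Complex.ofReal_inv,
    ← Complex.ofReal_mul, ← Complex.ofReal_sub] at hsum
  rw [← Real.norm_eq_abs, ← Complex.norm_real]
  refine le_of_tendsto hsum.norm (Filter.Eventually.of_forall fun K => ?_)
  rw [← Finset.sum_filter]
  refine (norm_sum_le _ _).trans ?_
  simp only [norm_mul]
  exact hB _ fun p hp => (Finset.mem_filter.1 hp).2

/-! ### Arithmetic of the dual lattice -/

lemma fibb_pos (n : ℕ) : 0 < fibb n := by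
  induction n using fibb.induct with
  | case1 => simp [fibb]
  | case2 => simp [fibb]
  | case3 n h1 h2 => rw [fibb]; omega

lemma fibb_pred_le (n : ℕ) : fibb (n - 1) ≤ fibb n := by
  rcases n with _ | _ | n
  · simp
  · simp [fibb]
  · simp [fibb]

/-- Cassini's identity for consecutive Fibonacci numbers. -/
lemma fibb_cassini (n : ℕ) :
    |(fibb n : ℤ) ^ 2 - fibb n * fibb (n - 1) - (fibb (n - 1) : ℤ) ^ 2| = 1 := by
  rcases n with _ | n
  · simp [fibb]
  induction n with
  | zero => simp [fibb]
  | succ n ih =>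
    have h : (fibb (n + 2) : ℤ) = fibb (n + 1) + fibb n := by rw [fibb]; push_cast; ring
    simp only [Nat.add_sub_cancel] at ih ⊢
    rw [← ih, h, ← abs_neg]
    congr 1
    ring

/-- The form `p² - pq - q²` is anisotropic over `ℤ`, since `4(p² - pq - q²) = (2p - q)² - 5q²` and
`√5` is irrational. -/
lemma golden_form_ne_zero {p q : ℤ} (h : p ^ 2 - p * q - q ^ 2 = 0) : q = 0 := by
  by_contra hq
  have hirr := Nat.Prime.irrational_sqrt (p := 5) (by norm_num)
  refine hirr ⟨|((2 * p - q : ℤ) : ℚ) / q|, ?_⟩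
  symm
  rw [Real.sqrt_eq_iff_mul_self_eq (by norm_num) (by positivity)]
  push_cast
  rw [← abs_mul, abs_mul_self]
  have hq' : (q : ℝ) ≠ 0 := by exact_mod_cast hq
  have hreal : (p : ℝ) ^ 2 - p * q - q ^ 2 = 0 := by exact_mod_cast h
  field_simp
  linear_combination -4 * hreal

/-- Nonzero points of the dual Fibonacci lattice avoid a hyperbolic cross of size comparable to
`fibb n`. For such a point `(k₁, k₂)` with `k₁ + bk₂ = Nq`, the integer `k₂² - k₂q - q²` is nonzero
because the golden ratio is irrational; substituting for `q` and using Cassini's identity yields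
`N² ≤ k₁² + 3N|k₁k₂| + k₂²`. -/
lemma lattice_bound (n : ℕ) (k₁ k₂ : ℤ) (hd : (fibb n : ℤ) ∣ k₁ + fibb (n - 1) * k₂)
    (hne : k₁ ≠ 0 ∨ k₂ ≠ 0) : (fibb n : ℤ) ≤ 6 * (max 1 |k₁| * max 1 |k₂|) := by
  obtain ⟨q, hq⟩ := hd
  have hc := fibb_cassini n
  have hN : (0 : ℤ) < fibb n := by exact_mod_cast fibb_pos n
  have hbN : (fibb (n - 1) : ℤ) ≤ fibb n := by exact_mod_cast fibb_pred_le n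
  have hb : (0 : ℤ) < fibb (n - 1) := by exact_mod_cast fibb_pos (n - 1)
  generalize (fibb n : ℤ) = N at *
  generalize (fibb (n - 1) : ℤ) = b at *
  have hW : k₂ ^ 2 - k₂ * q - q ^ 2 ≠ 0 := by
    intro h
    have hq0 := golden_form_ne_zero h
    subst hq0
    have h2 : k₂ = 0 := by simpa using h
    subst h2
    simp_all
  have hid : N ^ 2 * (k₂ ^ 2 - k₂ * q - q ^ 2) =
      k₂ ^ 2 * (N ^ 2 - N * b - b ^ 2) - k₁ * k₂ * (N + 2 * b) - k₁ ^ 2 := by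
    have : k₁ = N * q - b * k₂ := by linarith
    subst this; ring
  have hW1 := Int.one_le_abs hW
  have hmain : N ^ 2 ≤ k₂ ^ 2 + |k₁| * |k₂| * (3 * N) + k₁ ^ 2 := by
    calc N ^ 2 ≤ N ^ 2 * |k₂ ^ 2 - k₂ * q - q ^ 2| := le_mul_of_one_le_right (by positivity) hW1
      _ = |k₂ ^ 2 * (N ^ 2 - N * b - b ^ 2) - k₁ * k₂ * (N + 2 * b) - k₁ ^ 2| := by
        rw [← hid, abs_mul, abs_of_nonneg (sq_nonneg N)]
      _ ≤ |k₂ ^ 2 * (N ^ 2 - N * b - b ^ 2)| + |k₁ * k₂ * (N + 2 * b)| + |k₁ ^ 2| := by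
        refine (abs_sub _ _).trans ?_
        gcongr
        exact abs_sub _ _
      _ = k₂ ^ 2 + |k₁| * |k₂| * (N + 2 * b) + k₁ ^ 2 := by
        rw [abs_mul, hc, abs_mul, abs_mul, abs_of_pos (by linarith : 0 < N + 2 * b)]
        simp
      _ ≤ _ := by gcongr; linarith
  rw [← sq_abs k₁, ← sq_abs k₂] at hmain
  have hx := abs_nonneg k₁
  have hy := abs_nonneg k₂
  generalize |k₁| = x at *
  generalize |k₂| = y at *
  have hx1 := le_max_left 1 x
  have hx2 := le_max_right 1 x
  have hy1 := le_max_left 1 y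
  have hy2 := le_max_right 1 y
  generalize max 1 x = X at *
  generalize max 1 y = Y at *
  -- If both coordinates are below `N / 2`, the squares in `hmain` absorb at most `N² / 2`.
  by_cases h1 : N ≤ 2 * x
  · nlinarith
  by_cases h2 : N ≤ 2 * y
  · nlinarith
  push Not at h1 h2
  have h3 : N * N ≤ N * (6 * (x * y)) := by nlinarith
  have h4 := le_of_mul_le_mul_left h3 hN
  have h5 : x * y ≤ X * Y := by gcongr
  linarith

/-! ### Elementary summation bounds -/

/-- If the points of `K` are determined by a label `e₁ p` and an index `e₂ p`, and `f` is dominated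
by `g` evaluated at them, then summing `g` over all indices for each label bounds `∑ f`. -/
lemma sum_le_of_fibers {α β : Type*} [DecidableEq α] [DecidableEq β] (K : Finset α) (f : α → ℝ)
    (e₁ : α → β) (e₂ : α → ℕ) (he : Set.InjOn (fun p => (e₁ p, e₂ p)) K) (g : β → ℕ → ℝ) (h : β → ℝ)
    (hf : ∀ p ∈ K, f p ≤ g (e₁ p) (e₂ p)) (hg : ∀ b, ∀ T : Finset ℕ, ∑ i ∈ T, g b i ≤ h b) :
    ∑ p ∈ K, f p ≤ ∑ b ∈ K.image e₁, h b := by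
  rw [← Finset.sum_fiberwise_of_maps_to (t := K.image e₁)
    (fun p hp => Finset.mem_image_of_mem e₁ hp) f]
  refine Finset.sum_le_sum fun b _ => ?_
  calc ∑ p ∈ K with e₁ p = b, f p ≤ ∑ p ∈ K with e₁ p = b, g b (e₂ p) := by
        refine Finset.sum_le_sum fun p hp => ?_
        obtain ⟨hpK, rfl⟩ := Finset.mem_filter.1 hp
        exact hf p hpK
    _ = ∑ i ∈ (K.filter fun p => e₁ p = b).image e₂, g b i := by
        rw [Finset.sum_image]
        intro p hp p' hp' hpp
        have h1 := Finset.mem_filter.1 (Finset.mem_coe.1 hp)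
        have h2 := Finset.mem_filter.1 (Finset.mem_coe.1 hp')
        exact he h1.1 h2.1 (by simp only [h1.2, h2.2, hpp])
    _ ≤ h b := hg b _

lemma sum_fst_le {β γ : Type*} [DecidableEq β] [Fintype γ] (Q : Finset (β × γ)) (h : β → ℝ)
    (hh : ∀ b, 0 ≤ h b) :
    ∑ q ∈ Q, h q.1 ≤ Fintype.card γ * ∑ b ∈ Q.image Prod.fst, h b := by
  have hsub : Q ⊆ Q.image Prod.fst ×ˢ Finset.univ := fun q hq =>
    Finset.mem_product.2 ⟨Finset.mem_image_of_mem _ hq, Finset.mem_univ _⟩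
  refine (Finset.sum_le_sum_of_subset_of_nonneg hsub fun q _ _ => hh q.1).trans ?_
  rw [Finset.sum_product]
  simp [Finset.mul_sum]

/-- Since `min (w, 1/m) ≤ 2/(1/w + m)`, the sum of the squares is dominated by a telescoping one. -/
lemma sum_min_sq_le {w : ℝ} (hw : 0 < w) (T : Finset ℕ) :
    ∑ i ∈ T, (min w (1 / ((i : ℝ) + 1))) ^ 2 ≤ 4 * min w 1 := by
  have hv : 0 < min w 1 := lt_min hw one_pos
  set v := min w 1 with hv'
  set x := 1 / v with hx
  have hx0 : 0 < x := by positivity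
  have hterm : ∀ i : ℕ, (min w (1 / ((i : ℝ) + 1))) ^ 2 ≤ 4 * (1 / (x + i) - 1 / (x + (i + 1 : ℕ))) := by
    intro i
    have h1 : min w (1 / ((i : ℝ) + 1)) ≤ v := by
      refine le_min (min_le_left _ _) ((min_le_right _ _).trans ?_)
      rw [div_le_one (by positivity)]; linarith [Nat.cast_nonneg (α := ℝ) i]
    have h2 : min w (1 / ((i : ℝ) + 1)) ≤ 1 / ((i : ℝ) + 1) := min_le_right _ _
    have h0 : 0 < min w (1 / ((i : ℝ) + 1)) := lt_min hw (by positivity)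
    set z := min w (1 / ((i : ℝ) + 1))
    have h3 : z * x ≤ 1 := by rw [hx, mul_one_div, div_le_one hv]; exact h1
    have h4 : z * (i + 1) ≤ 1 := by rwa [le_div_iff₀ (by positivity)] at h2
    have h5 : z * (x + (i + 1)) ≤ 2 := by linarith
    have h6 : z * (x + i) ≤ 2 := by linarith
    have h7 : 1 / (x + i) - 1 / (x + (i + 1 : ℕ)) = 1 / ((x + i) * (x + (i + 1))) := by
      push_cast; field_simp; ring
    rw [h7, mul_one_div, le_div_iff₀ (by positivity)]
    have h8 : (z * (x + i)) * (z * (x + (i + 1))) ≤ 2 * 2 := by gcongr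
    nlinarith
  obtain ⟨m, hm⟩ := T.exists_nat_subset_range
  calc ∑ i ∈ T, (min w (1 / ((i : ℝ) + 1))) ^ 2
      ≤ ∑ i ∈ Finset.range m, (min w (1 / ((i : ℝ) + 1))) ^ 2 :=
        Finset.sum_le_sum_of_subset_of_nonneg hm fun _ _ _ => sq_nonneg _
    _ ≤ ∑ i ∈ Finset.range m, 4 * (1 / (x + i) - 1 / (x + (i + 1 : ℕ))) :=
        Finset.sum_le_sum fun i _ => hterm i
    _ = 4 * (1 / (x + (0 : ℕ)) - 1 / (x + m)) := by
        rw [← Finset.mul_sum, Finset.sum_range_sub' (fun i : ℕ => 1 / (x + (i : ℝ)))]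
    _ ≤ 4 * v := by
        have : 1 / (x + (0 : ℕ)) = v := by rw [hx]; simp
        rw [this]
        have : 0 < 1 / (x + m) := by positivity
        linarith

lemma sum_half_pow_le (T : Finset ℕ) : ∑ j ∈ T, (1 / 2 : ℝ) ^ j ≤ 2 := by
  exact (summable_geometric_two.sum_le_tsum T fun _ _ => by positivity).trans
    tsum_geometric_two.le

/-- Up to geometrically decaying tails, only the dyadic scales with `1/a ≤ 2^s ≤ M` contribute, and
there are about `log₂ (aM)` of them. -/
lemma sum_dyadic_le {a M : ℝ} (ha : 0 < a) (ha1 : a ≤ 1) (haM : 1 ≤ a * M) (P : Finset ℕ) :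
    ∑ s ∈ P, min (a * 2 ^ s) 1 * min (M / 2 ^ s) 1 ≤ 5 + Real.logb 2 (a * M) := by
  have hM : 1 ≤ M := by nlinarith
  have hL0 : 0 ≤ Real.logb 2 (1 / a) := Real.logb_nonneg one_lt_two (by rw [le_div_iff₀ ha]; linarith)
  have hR0 : 0 ≤ Real.logb 2 M := Real.logb_nonneg one_lt_two hM
  have hlog : Real.logb 2 (a * M) = Real.logb 2 M - Real.logb 2 (1 / a) := by
    rw [Real.logb_mul ha.ne' (by linarith), one_div, Real.logb_inv]; ring
  set p := ⌊Real.logb 2 (1 / a)⌋₊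
  set q := ⌊Real.logb 2 M⌋₊
  have hp1 : a * 2 ^ p ≤ 1 := by
    have := Nat.floor_le hL0
    rw [Real.le_logb_iff_rpow_le one_lt_two (by positivity), Real.rpow_natCast, le_div_iff₀ ha] at this
    linarith
  have hp2 : Real.logb 2 (1 / a) < p + 1 := Nat.lt_floor_add_one _
  have hq1 : M ≤ 2 ^ (q + 1) := by
    have := Nat.lt_floor_add_one (Real.logb 2 M)
    rw [Real.logb_lt_iff_lt_rpow one_lt_two (by linarith)] at this
    exact_mod_cast this.le
  have hq2 : (q : ℝ) ≤ Real.logb 2 M := Nat.floor_le hR0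
  have hpq : p ≤ q := Nat.floor_le_floor (by
    have := Real.logb_nonneg one_lt_two haM; linarith)
  have hn1 : ∀ s : ℕ, 0 ≤ min (a * 2 ^ s) 1 := fun s => le_min (by positivity) zero_le_one
  have hn2 : ∀ s : ℕ, 0 ≤ min (M / 2 ^ s) 1 := fun s => le_min (by positivity) zero_le_one
  have hterm : ∀ s : ℕ, min (a * 2 ^ s) 1 * min (M / 2 ^ s) 1 ≤
      (if s ≤ p then (1 / 2 : ℝ) ^ (p - s) else 0) + (if p < s ∧ s ≤ q then 1 else 0) +
        (if q < s then (1 / 2 : ℝ) ^ (s - (q + 1)) else 0) := by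
    intro s
    rcases le_or_gt s p with h1 | h1
    · rw [if_pos h1, if_neg (by omega), if_neg (by omega), add_zero, add_zero]
      refine (mul_le_of_le_one_right (hn1 s) (min_le_right _ _)).trans ((min_le_left _ _).trans ?_)
      rw [one_div, inv_pow, ← one_div, le_div_iff₀ (by positivity), mul_assoc, ← pow_add,
        Nat.add_sub_cancel' h1]
      exact hp1
    rcases le_or_gt s q with h2 | h2
    · rw [if_neg (by omega), if_pos ⟨h1, h2⟩, if_neg (by omega), add_zero, zero_add]
      exact mul_le_one₀ (min_le_right _ _) (hn2 s) (min_le_right _ _)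
    · rw [if_neg (by omega), if_neg (by omega), if_pos h2, zero_add, zero_add]
      refine (mul_le_of_le_one_left (hn2 s) (min_le_right _ _)).trans ((min_le_left _ _).trans ?_)
      rw [one_div, inv_pow, ← one_div, div_le_div_iff₀ (by positivity) (by positivity), one_mul]
      calc M * 2 ^ (s - (q + 1)) ≤ 2 ^ (q + 1) * 2 ^ (s - (q + 1)) := by gcongr
        _ = 2 ^ s := by rw [← pow_add, Nat.add_sub_cancel' (by omega)]
  refine (Finset.sum_le_sum fun s _ => hterm s).trans ?_
  rw [Finset.sum_add_distrib, Finset.sum_add_distrib, ← Finset.sum_filter, ← Finset.sum_filter,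
    ← Finset.sum_filter]
  have t1 : ∑ s ∈ P with s ≤ p, (1 / 2 : ℝ) ^ (p - s) ≤ 2 := by
    rw [← Finset.sum_image (f := fun j => (1 / 2 : ℝ) ^ j) (g := fun s => p - s)]
    · exact sum_half_pow_le _
    · intro s hs s' hs' h
      simp only [Finset.coe_filter, Set.mem_ofPred_eq] at hs hs'
      have := hs.2; have := hs'.2
      simp only at h
      omega
  have t3 : ∑ s ∈ P with q < s, (1 / 2 : ℝ) ^ (s - (q + 1)) ≤ 2 := by
    rw [← Finset.sum_image (f := fun j => (1 / 2 : ℝ) ^ j) (g := fun s => s - (q + 1))]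
    · exact sum_half_pow_le _
    · intro s hs s' hs' h
      simp only [Finset.coe_filter, Set.mem_ofPred_eq] at hs hs'
      have := hs.2; have := hs'.2
      simp only at h
      omega
  have t2 : ∑ s ∈ P with p < s ∧ s ≤ q, (1 : ℝ) ≤ q - p := by
    have hsub : (P.filter fun s => p < s ∧ s ≤ q) ⊆ Finset.Ioc p q := fun s hs =>
      Finset.mem_Ioc.2 (Finset.mem_filter.1 hs).2
    have := Finset.card_le_card hsub
    rw [Nat.card_Ioc] at this
    rw [Finset.sum_const, nsmul_eq_mul, mul_one, ← Nat.cast_sub hpq]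
    exact_mod_cast this
  linarith

/-! ### Summation of the majorants over the dual lattice -/

lemma maj_le_left (u : ℝ) (k : ℤ) : maj u k ≤ u := min_le_left _ _

lemma maj_le_right (u : ℝ) (k : ℤ) : maj u k ≤ 1 / max 1 |(k : ℝ)| := min_le_right _ _

lemma natAbs_sub_of_sign {x y : ℤ} (h : decide (0 ≤ x) = decide (0 ≤ y)) :
    ((x - y).natAbs : ℤ) = |(x.natAbs : ℤ) - y.natAbs| := by
  rw [decide_eq_decide] at h
  by_cases hx : 0 ≤ x
  · have hy := h.1 hx
    rw [Int.natAbs_of_nonneg hx, Int.natAbs_of_nonneg hy, Int.natCast_natAbs]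
  · have hy : ¬ 0 ≤ y := fun h' => hx (h.2 h')
    push Not at hx hy
    rw [Int.ofNat_natAbs_of_nonpos hx.le, Int.ofNat_natAbs_of_nonpos hy.le, Int.natCast_natAbs,
      ← abs_neg]
    congr 1; ring

/-- The nonzero points of the dual lattice of the Fibonacci point set. -/
def DualPt (n : ℕ) (p : ℤ × ℤ) : Prop :=
  (fibb n : ℤ) ∣ p.1 + fibb (n - 1) * p.2 ∧ p ≠ 0

lemma dual_bound_nat {n : ℕ} {p : ℤ × ℤ} (hp : DualPt n p) :
    fibb n ≤ 6 * (max 1 p.1.natAbs * max 1 p.2.natAbs) := by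
  have h := lattice_bound n p.1 p.2 hp.1 (by
    by_contra! h; exact hp.2 (Prod.ext h.1 h.2))
  rw [← Int.natCast_natAbs, ← Int.natCast_natAbs] at h
  exact_mod_cast h

lemma max_abs_cast (k : ℤ) : max 1 |(k : ℝ)| = ((max 1 k.natAbs : ℕ) : ℝ) := by
  rw [Nat.cast_max, Nat.cast_natAbs]; simp

lemma DualPt.sub {n : ℕ} {p p' : ℤ × ℤ} (hp : DualPt n p) (hp' : DualPt n p') (hne : p ≠ p') :
    DualPt n (p - p') := by
  refine ⟨?_, sub_ne_zero.2 hne⟩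
  have e : (p - p').1 + fibb (n - 1) * (p - p').2 =
      (p.1 + fibb (n - 1) * p.2) - (p'.1 + fibb (n - 1) * p'.2) := by
    rw [Prod.fst_sub, Prod.snd_sub]; ring
  have hd := hp'.1
  rw [e]
  exact dvd_sub hp.1 hd

/-- The contribution of the points with large first coordinate: for a fixed second coordinate the
first coordinates are congruent modulo `fibb n`. -/
lemma sum_far_le (n : ℕ) {u1 u2 : ℝ} (hu1 : 0 < u1) (hu2 : 0 < u2) (K : Finset (ℤ × ℤ))
    (hK : ∀ p ∈ K, DualPt n p) (hfar : ∀ p ∈ K, fibb n ≤ 6 * max 1 p.1.natAbs) :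
    ∑ p ∈ K, (maj u1 p.1 * maj u2 p.2) ^ 2 ≤
      1152 * (∑' k : ℤ, (1 / max 1 |(k : ℝ)|) ^ 2) / (fibb n : ℝ) ^ 2 := by
  have hN := fibb_pos n
  set N := fibb n with hNdef
  have hN' : (0 : ℝ) < N := by exact_mod_cast hN
  have key := sum_le_of_fibers K (fun p => (maj u1 p.1 * maj u2 p.2) ^ 2)
    (fun p => (p.2, decide (0 ≤ p.1))) (fun p => p.1.natAbs / N)
    (by
      -- Equal labels force `|k₁ - k₁'| < N`, whereas `N` divides this difference.
      intro p hp p' hp' h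
      simp only [Prod.mk.injEq] at h
      obtain ⟨⟨h2, hs⟩, hq⟩ := h
      refine Prod.ext ?_ h2
      have hd : (N : ℤ) ∣ p.1 - p'.1 := by
        have := dvd_sub (hK p hp).1 (hK p' hp').1
        rw [h2] at this
        simpa using this
      have hlt : (p.1 - p'.1).natAbs < N := by
        have e := natAbs_sub_of_sign hs
        have b1 := Nat.div_add_mod p.1.natAbs N
        have b2 := Nat.div_add_mod p'.1.natAbs N
        have b3 := Nat.mod_lt p.1.natAbs hN
        have b4 := Nat.mod_lt p'.1.natAbs hN
        rw [hq] at b1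
        have : |(p.1.natAbs : ℤ) - p'.1.natAbs| < N := by rw [abs_lt]; omega
        omega
      have := Int.eq_zero_of_abs_lt_dvd hd (by rw [← Int.natCast_natAbs]; exact_mod_cast hlt)
      linarith)
    (fun b j => (1 / max 1 |(b.1 : ℝ)|) ^ 2 * (144 / (N : ℝ) ^ 2) *
      (min 1 (1 / ((j : ℝ) + 1))) ^ 2)
    (fun b => 576 / (N : ℝ) ^ 2 * (1 / max 1 |(b.1 : ℝ)|) ^ 2)
    (by
      intro p hp
      simp only
      set j := p.1.natAbs / N with hj
      have hj1 : ((j : ℝ) + 1) * N ≤ 12 * max 1 |(p.1 : ℝ)| := by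
        rw [max_abs_cast]
        have : (j + 1) * N ≤ 12 * max 1 p.1.natAbs := by
          have h6 := hfar p hp
          have h7 : j * N ≤ p.1.natAbs := Nat.div_mul_le_self _ _
          have h8 := le_max_right 1 p.1.natAbs
          nlinarith
        exact_mod_cast this
      have hm : (0 : ℝ) < max 1 |(p.1 : ℝ)| := by positivity
      have hmin : min 1 (1 / ((j : ℝ) + 1)) = 1 / ((j : ℝ) + 1) := by
        refine min_eq_right ?_
        rw [div_le_one (by positivity)]; linarith [Nat.cast_nonneg (α := ℝ) j]
      rw [hmin]
      have h1 : maj u1 p.1 ≤ 12 / N * (1 / ((j : ℝ) + 1)) := by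
        refine (maj_le_right _ _).trans ?_
        rw [div_mul_div_comm, mul_one, div_le_div_iff₀ hm (by positivity)]
        linarith
      calc (maj u1 p.1 * maj u2 p.2) ^ 2
          ≤ ((12 / N * (1 / ((j : ℝ) + 1))) * (1 / max 1 |(p.2 : ℝ)|)) ^ 2 := by
            have := maj_pos hu1 p.1
            have := maj_pos hu2 p.2
            gcongr
            exact maj_le_right _ _
        _ = _ := by ring)
    (by
      intro b T
      rw [← Finset.mul_sum]
      have := sum_min_sq_le one_pos T
      rw [min_self] at this
      calc _ ≤ (1 / max 1 |(b.1 : ℝ)|) ^ 2 * (144 / (N : ℝ) ^ 2) * (4 * 1) := by gcongr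
        _ = _ := by ring)
  refine key.trans ((sum_fst_le _ (fun k : ℤ => 576 / (N : ℝ) ^ 2 * (1 / max 1 |(k : ℝ)|) ^ 2)
    fun k => by positivity).trans ?_)
  rw [← Finset.mul_sum]
  have hle := summable_inv_max_sq.sum_le_tsum
    ((K.image fun p => (p.2, decide (0 ≤ p.1))).image Prod.fst) fun _ _ => by positivity
  simp only [Fintype.card_bool]
  calc _ ≤ ((2 : ℕ) : ℝ) * (576 / (N : ℝ) ^ 2 * ∑' k : ℤ, (1 / max 1 |(k : ℝ)|) ^ 2) := by gcongr
    _ = _ := by push_cast; ring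

/-- The contribution of the points with small first coordinate, split dyadically according to
the first coordinate: within one dyadic strip the second coordinates are separated, by the lattice
bound applied to differences. -/
lemma sum_near_le (n : ℕ) {u1 u2 : ℝ} (hu1 : 0 < u1) (hu1' : u1 ≤ 1) (hu2 : 0 < u2)
    (hV : 1 ≤ u1 * (u2 * fibb n / 12)) (K : Finset (ℤ × ℤ))
    (hK : ∀ p ∈ K, DualPt n p) (hnear : ∀ p ∈ K, 6 * max 1 p.1.natAbs < fibb n) :
    ∑ p ∈ K, (maj u1 p.1 * maj u2 p.2) ^ 2 ≤
      2304 * (5 + Real.logb 2 (u1 * (u2 * fibb n / 12))) / (fibb n : ℝ) ^ 2 := by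
  have hN := fibb_pos n
  set N := fibb n with hNdef
  have hN' : (0 : ℝ) < N := by exact_mod_cast hN
  set M := u2 * N / 12 with hM
  have hM0 : 0 < M := by positivity
  have hlog : ∀ p : ℤ × ℤ, 2 ^ Nat.log 2 (max 1 p.1.natAbs) ≤ max 1 p.1.natAbs ∧
      max 1 p.1.natAbs < 2 * 2 ^ Nat.log 2 (max 1 p.1.natAbs) := fun p =>
    ⟨Nat.pow_log_le_self 2 (by positivity), by
      have := Nat.lt_pow_succ_log_self one_lt_two (max 1 p.1.natAbs)
      rwa [pow_succ, mul_comm] at this⟩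
  -- The index is `⌊|k₂| / δ⌋` with `δ = N / (6·2^s)`, written with natural division.
  have key := sum_le_of_fibers K (fun p => (maj u1 p.1 * maj u2 p.2) ^ 2)
    (fun p => (Nat.log 2 (max 1 p.1.natAbs), decide (0 ≤ p.1), decide (0 ≤ p.2)))
    (fun p => 6 * 2 ^ Nat.log 2 (max 1 p.1.natAbs) * p.2.natAbs / N)
    (by
      -- Two distinct points with the same label and index would differ by a dual point violating
      -- the lattice bound.
      intro p hp p' hp' h
      simp only [Prod.mk.injEq] at h
      obtain ⟨⟨hs, hs1, hs2⟩, hq⟩ := h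
      by_contra hne
      have hb := dual_bound_nat ((hK p hp).sub (hK p' hp') hne)
      have hl := hlog p
      have hl' := hlog p'
      have hn := hnear p hp
      rw [hs] at hl hq
      set S := 2 ^ Nat.log 2 (max 1 p'.1.natAbs) with hS
      have hS1 : 1 ≤ S := Nat.one_le_two_pow
      clear_value S
      have d1 : (p - p').1.natAbs ≤ S := by
        have e := natAbs_sub_of_sign hs1
        have : |(p.1.natAbs : ℤ) - p'.1.natAbs| ≤ S := by
          rw [abs_le]; constructor <;> omega
        simp only [Prod.fst_sub]
        omega
      have d2 : 6 * S * (p - p').2.natAbs < N := by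
        have e := natAbs_sub_of_sign hs2
        have b1 := Nat.div_add_mod (6 * S * p.2.natAbs) N
        have b2 := Nat.div_add_mod (6 * S * p'.2.natAbs) N
        have b3 := Nat.mod_lt (6 * S * p.2.natAbs) hN
        have b4 := Nat.mod_lt (6 * S * p'.2.natAbs) hN
        rw [hq] at b1
        have : |((6 * S * p.2.natAbs : ℕ) : ℤ) - (6 * S * p'.2.natAbs : ℕ)| < N := by
          rw [abs_lt]; omega
        have e2 : ((6 * S * (p.2 - p'.2).natAbs : ℕ) : ℤ) =
            |((6 * S * p.2.natAbs : ℕ) : ℤ) - (6 * S * p'.2.natAbs : ℕ)| := by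
          push_cast at e ⊢
          rw [e, ← abs_of_nonneg (by positivity : (0 : ℤ) ≤ 6 * S), ← abs_mul]
          congr 1
          rw [abs_of_nonneg (by positivity : (0 : ℤ) ≤ 6 * S)]
          ring
        simp only [Prod.snd_sub]
        rw [← e2] at this
        exact_mod_cast this
      have d1' : max 1 (p - p').1.natAbs ≤ S := by omega
      have hb' : N ≤ 6 * (S * max 1 (p - p').2.natAbs) :=
        hb.trans (by gcongr)
      rcases le_total 1 (p - p').2.natAbs with h1 | h1
      · rw [max_eq_right h1] at hb'
        nlinarith
      · rw [max_eq_left h1] at hb'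
        omega)
    (fun b i => (min (u1 * 2 ^ b.1) 1) ^ 2 * (144 / (N : ℝ) ^ 2) *
      (min (M / 2 ^ b.1) (1 / ((i : ℝ) + 1))) ^ 2)
    (fun b => 576 / (N : ℝ) ^ 2 * (min (u1 * 2 ^ b.1) 1 * min (M / 2 ^ b.1) 1))
    (by
      intro p hp
      simp only
      have hl := hlog p
      have hb := dual_bound_nat (hK p hp)
      have hn := hnear p hp
      set s := Nat.log 2 (max 1 p.1.natAbs)
      set i := 6 * 2 ^ s * p.2.natAbs / N with hi
      have hm2 : ((i : ℝ) + 1) * N ≤ 12 * 2 ^ s * max 1 |(p.2 : ℝ)| := by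
        rw [max_abs_cast]
        -- For `i = 0` this is the lattice bound itself, otherwise it follows from `i + 1 ≤ 2i`.
        have : (i + 1) * N ≤ 12 * 2 ^ s * max 1 p.2.natAbs := by
          have h7 : i * N ≤ 6 * 2 ^ s * p.2.natAbs := Nat.div_mul_le_self _ _
          have h8 := le_max_right 1 p.2.natAbs
          rcases Nat.eq_zero_or_pos i with h0 | h0
          · rw [h0, zero_add, one_mul]
            calc N ≤ 6 * (max 1 p.1.natAbs * max 1 p.2.natAbs) := hb
              _ ≤ 6 * ((2 * 2 ^ s) * max 1 p.2.natAbs) := by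
                  have := hl.2.le
                  gcongr
              _ = _ := by ring
          · calc (i + 1) * N ≤ 2 * (i * N) := by nlinarith
              _ ≤ 2 * (6 * 2 ^ s * max 1 p.2.natAbs) := by
                  refine Nat.mul_le_mul_left _ (h7.trans ?_)
                  gcongr
              _ = _ := by ring
        exact_mod_cast this
      have h1 : maj u1 p.1 ≤ min (u1 * 2 ^ s) 1 / 2 ^ s := by
        rw [le_div_iff₀ (by positivity)]
        refine le_min ?_ ?_
        · have := maj_le_left u1 p.1
          gcongr
        · have h3 : (2 : ℝ) ^ s ≤ max 1 |(p.1 : ℝ)| := by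
            rw [max_abs_cast]; exact_mod_cast hl.1
          have h4 := maj_le_right u1 p.1
          rw [le_div_iff₀ (by positivity)] at h4
          have := maj_pos hu1 p.1
          exact (mul_le_mul_of_nonneg_left h3 this.le).trans h4
      have h2 : maj u2 p.2 ≤ 12 * 2 ^ s / N * min (M / 2 ^ s) (1 / ((i : ℝ) + 1)) := by
        rw [mul_min_of_nonneg _ _ (by positivity)]
        refine le_min ?_ ?_
        · have : 12 * 2 ^ s / N * (M / 2 ^ s) = u2 := by rw [hM]; field_simp
          rw [this]; exact maj_le_left _ _
        · refine (maj_le_right _ _).trans ?_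
          rw [div_mul_div_comm, mul_one, div_le_div_iff₀ (by positivity) (by positivity)]
          linarith
      have hp1 := maj_pos hu1 p.1
      have hp2 := maj_pos hu2 p.2
      calc (maj u1 p.1 * maj u2 p.2) ^ 2
          ≤ ((min (u1 * 2 ^ s) 1 / 2 ^ s) *
              (12 * 2 ^ s / N * min (M / 2 ^ s) (1 / ((i : ℝ) + 1)))) ^ 2 := by
            have : 0 ≤ min (u1 * 2 ^ s) 1 / 2 ^ s := hp1.le.trans h1
            gcongr
        _ = _ := by field_simp; ring)
    (by
      intro b T
      rw [← Finset.mul_sum]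
      have h1 := sum_min_sq_le (w := M / 2 ^ b.1) (by positivity) T
      have h2 : 0 < min (u1 * 2 ^ b.1) 1 := lt_min (by positivity) one_pos
      have h3 : min (u1 * 2 ^ b.1) 1 ≤ 1 := min_le_right _ _
      have h4 : 0 < min (M / 2 ^ b.1) 1 := lt_min (by positivity) one_pos
      calc _ ≤ min (u1 * 2 ^ b.1) 1 ^ 2 * (144 / (N : ℝ) ^ 2) * (4 * min (M / 2 ^ b.1) 1) := by gcongr
        _ ≤ min (u1 * 2 ^ b.1) 1 ^ 1 * (144 / (N : ℝ) ^ 2) * (4 * min (M / 2 ^ b.1) 1) := by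
            have := pow_le_pow_of_le_one h2.le h3 one_le_two
            gcongr
        _ = _ := by ring)
  refine key.trans ((sum_fst_le _ (fun s : ℕ => 576 / (N : ℝ) ^ 2 *
    (min (u1 * 2 ^ s) 1 * min (M / 2 ^ s) 1)) fun s => by positivity).trans ?_)
  rw [← Finset.mul_sum]
  simp only [Fintype.card_prod, Fintype.card_bool]
  have := sum_dyadic_le hu1 hu1' hV ((K.image fun p : ℤ × ℤ => (Nat.log 2 (max 1 p.1.natAbs),
    decide (0 ≤ p.1), decide (0 ≤ p.2))).image Prod.fst)
  calc _ ≤ ((2 * 2 : ℕ) : ℝ) * (576 / (N : ℝ) ^ 2 * (5 + Real.logb 2 (u1 * M))) := by gcongr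
    _ = _ := by push_cast; ring

/-- The sum of the majorants over the nonzero dual lattice points. There each product of two of them
is at most `6 / fibb n`, which reduces all exponents to the exponent `2`. -/
lemma sum_dual_le (n : ℕ) {r : ℕ} (hr : 2 ≤ r) {u1 u2 : ℝ} (hu1 : 0 < u1) (hu1' : u1 ≤ 1)
    (hu2 : 0 < u2) (hV : 1 ≤ u1 * (u2 * fibb n / 12)) (K : Finset (ℤ × ℤ))
    (hK : ∀ p ∈ K, DualPt n p) :
    ∑ p ∈ K, (maj u1 p.1 * maj u2 p.2) ^ r ≤
      6 ^ (r - 2) * (11520 + 1152 * ∑' k : ℤ, (1 / max 1 |(k : ℝ)|) ^ 2) *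
        (1 + Real.logb 2 (u1 * (u2 * fibb n / 12))) / (fibb n : ℝ) ^ r := by
  have hN' : (0 : ℝ) < fibb n := by exact_mod_cast fibb_pos n
  have hl : 0 ≤ Real.logb 2 (u1 * (u2 * fibb n / 12)) := Real.logb_nonneg one_lt_two hV
  have hZ : 0 ≤ ∑' k : ℤ, (1 / max 1 |(k : ℝ)|) ^ 2 := tsum_nonneg fun k => by positivity
  have h1 : ∀ p ∈ K, (maj u1 p.1 * maj u2 p.2) ^ r ≤
      (6 / fibb n : ℝ) ^ (r - 2) * (maj u1 p.1 * maj u2 p.2) ^ 2 := by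
    intro p hp
    have hp1 := maj_pos hu1 p.1
    have hp2 := maj_pos hu2 p.2
    have hle : maj u1 p.1 * maj u2 p.2 ≤ 6 / fibb n := by
      calc _ ≤ (1 / max 1 |(p.1 : ℝ)|) * (1 / max 1 |(p.2 : ℝ)|) := by
            gcongr
            · exact maj_le_right _ _
            · exact maj_le_right _ _
        _ ≤ _ := by
            rw [div_mul_div_comm, mul_one, div_le_div_iff₀ (by positivity) hN', max_abs_cast,
              max_abs_cast, one_mul]
            exact_mod_cast dual_bound_nat (hK p hp)
    calc _ = (maj u1 p.1 * maj u2 p.2) ^ (r - 2) * (maj u1 p.1 * maj u2 p.2) ^ 2 := by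
          rw [← pow_add, Nat.sub_add_cancel hr]
      _ ≤ _ := by gcongr
  refine (Finset.sum_le_sum h1).trans ?_
  rw [← Finset.mul_sum, ← Finset.sum_filter_add_sum_filter_not K
    (fun p => fibb n ≤ 6 * max 1 p.1.natAbs)]
  have hA := sum_far_le n hu1 hu2 (K.filter fun p => fibb n ≤ 6 * max 1 p.1.natAbs)
    (fun p hp => hK p (Finset.mem_filter.1 hp).1) (fun p hp => (Finset.mem_filter.1 hp).2)
  have hB := sum_near_le n hu1 hu1' hu2 hV (K.filter fun p => ¬ fibb n ≤ 6 * max 1 p.1.natAbs)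
    (fun p hp => hK p (Finset.mem_filter.1 hp).1)
    (fun p hp => not_le.1 (Finset.mem_filter.1 hp).2)
  set Z := ∑' k : ℤ, (1 / max 1 |(k : ℝ)|) ^ 2
  set l := Real.logb 2 (u1 * (u2 * fibb n / 12))
  have hnum : 1152 * Z + 2304 * (5 + l) ≤ (11520 + 1152 * Z) * (1 + l) := by nlinarith [mul_nonneg hZ hl]
  calc _ ≤ (6 / fibb n : ℝ) ^ (r - 2) * (1152 * Z / (fibb n : ℝ) ^ 2 +
        2304 * (5 + l) / (fibb n : ℝ) ^ 2) := by gcongr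
    _ = 6 ^ (r - 2) * (1152 * Z + 2304 * (5 + l)) / (fibb n : ℝ) ^ r := by
        obtain ⟨m, rfl⟩ := Nat.exists_eq_add_of_le' hr
        rw [Nat.add_sub_cancel, div_pow, pow_add]
        field_simp
    _ ≤ 6 ^ (r - 2) * ((11520 + 1152 * Z) * (1 + l)) / (fibb n : ℝ) ^ r := by gcongr
    _ = _ := by ring

/-- Let `d = 2` and `r ≥ 2`. There exist constants `c(r) > 0` and `C(r) > 0` such that for
every `n` and every `V ≥ V₀ := c(r)/b_n`: for every axis-parallel box
`B = ∏_{j=1}^2 [x⁰_j - ru_j/2, x⁰_j + ru_j/2) ⊆ [0,1)²` with `vol(B) = V`, one has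
`|b_n⁻¹ Σ_{μ=1}^{b_n} h^r_B(μ/b_n, {μ b_{n-1}/b_n}) - ∫_{[0,1]²} h^r_B| ≤ C(r) log₂(2V/V₀)/b_n^r`. -/
theorem fibonacci_r_smooth_fixed_volume_discrepancy (r : ℕ) (hr : 2 ≤ r) :
    ∃ c C : ℝ, 0 < c ∧ 0 < C ∧ ∀ n : ℕ, ∀ V : ℝ, c / (fibb n : ℝ) ≤ V →
      ∀ x01 x02 u1 u2 : ℝ, 0 < u1 → 0 < u2 →
      0 ≤ x01 - r * u1 / 2 → x01 + r * u1 / 2 ≤ 1 →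
      0 ≤ x02 - r * u2 / 2 → x02 + r * u2 / 2 ≤ 1 →
      (r * u1) * (r * u2) = V →
      |((fibb n : ℝ))⁻¹ *
          (∑ μ ∈ Finset.Icc 1 (fibb n),
            hkerPer r u1 ((μ : ℝ) / (fibb n : ℝ) - x01) *
              hkerPer r u2 (Int.fract ((μ : ℝ) * (fibb (n - 1) : ℝ) / (fibb n : ℝ)) - x02)) -
          ∫ x1 in (0 : ℝ)..1, ∫ x2 in (0 : ℝ)..1,
            hkerPer r u1 (x1 - x01) * hkerPer r u2 (x2 - x02)| ≤
        C * Real.logb 2 (2 * V / (c / (fibb n : ℝ))) / (fibb n : ℝ) ^ r := by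
  have hZ : 0 ≤ ∑' k : ℤ, (1 / max 1 |(k : ℝ)|) ^ 2 := tsum_nonneg fun k => by positivity
  have hr2 : (2 : ℝ) ≤ r := by exact_mod_cast hr
  -- With this `c` the ratio `V / V₀` equals `u₁u₂b_n / 12`.
  refine ⟨12 * (r : ℝ) ^ 2, 6 ^ (r - 2) * (11520 + 1152 * ∑' k : ℤ, (1 / max 1 |(k : ℝ)|) ^ 2),
    by positivity, by positivity, ?_⟩
  intro n V hV x01 x02 u1 u2 hu1 hu2 ha1 hb1 ha2 hb2 hvol
  have hN' : (0 : ℝ) < fibb n := by exact_mod_cast fibb_pos n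
  have hu1' : u1 ≤ 1 := by nlinarith
  have hu2' : u2 ≤ 1 := by nlinarith
  have hratio : 2 * V / (12 * (r : ℝ) ^ 2 / fibb n) = 2 * (u1 * (u2 * fibb n / 12)) := by
    rw [← hvol]; field_simp
  have hge : 1 ≤ u1 * (u2 * fibb n / 12) := by
    have h1 : V / (12 * (r : ℝ) ^ 2 / fibb n) = u1 * (u2 * fibb n / 12) := by
      rw [← hvol]; field_simp
    rw [← h1, le_div_iff₀ (by positivity), one_mul]
    exact hV
  have hlog : Real.logb 2 (2 * V / (12 * (r : ℝ) ^ 2 / fibb n)) =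
      1 + Real.logb 2 (u1 * (u2 * fibb n / 12)) := by
    rw [hratio, Real.logb_mul two_ne_zero (by positivity), Real.logb_self_eq_one one_lt_two]
  rw [hlog]
  obtain ⟨a, ha, hF⟩ := hkerPer_fourier hu1 hu1' hr x01
  obtain ⟨c, hc, hG⟩ := hkerPer_fourier hu2 hu2' hr x02
  refine error_le (fibb_pos n) (fibb (n - 1)) (F := fun t => hkerPer r u1 (t - x01))
    (G := fun t => hkerPer r u2 (t - x02))
    ((summable_maj_pow hu1 hr).of_nonneg_of_le (fun _ => norm_nonneg _) ha)
    ((summable_maj_pow hu2 hr).of_nonneg_of_le (fun _ => norm_nonneg _) hc) hF hG fun K hK => ?_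
  refine le_trans (Finset.sum_le_sum fun p _ => ?_) (sum_dual_le n hr hu1 hu1' hu2 hge K hK)
  rw [mul_pow]
  exact mul_le_mul (ha _) (hc _) (norm_nonneg _) (pow_nonneg (maj_pos hu1 _).le _)
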